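/- arXiv:math/0210439 — 3 statements merged into one kernel-verified Lean document; each statement's English description precedes it below -/
import Mathlib

section
/- Let D be a triangulated category and let a_m →^{d_m} a_{m-1} → ... → a_1 →^{d_1} a_0 be a bounded complex of objects of D (i.e. d_i ∘ d_{i+1} = 0 for 1 ≤ i < m) satisfying Hom_D(a_p[r], a_q) = 0 for all p > q and all r > 0. Then there exists a right convolution d_0 : a_0 → a of this complex, and the pair (a, d_0) is uniquely determined up to isomorphism. -/
/-!
Statement 0 (Kawamata, "Equivalences of derived categories of sheaves on smooth stacks",
cf. Orlov, Lemma 1.5).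

Let `D` be a triangulated category and let
`a_m →^{d_m} a_{m-1} → ... → a_1 →^{d_1} a_0`
be a bounded complex of objects of `D` (i.e. `d_i ∘ d_{i+1} = 0` for `1 ≤ i < m`)
satisfying `Hom_D(a_p[r], a_q) = 0` for all `p > q` and all `r > 0`.  Then there exists a
right convolution `d_0 : a_0 → a` of this complex, and the pair `(a, d_0)` is uniquely
determined up to isomorphism.

We encode the complex with *top-down* indexing: `b i` is the object `a_{m-i}`
(so `b 0 = a_m` is the top and `b m = a_0` is the bottom), and `d i : b i ⟶ b (i+1)`
is the differential `a_{m-i} → a_{m-i-1}`.  The inductive predicate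
`IsRightConvolution m b d c e` expresses that `e : b m ⟶ c` (i.e. `a_0 → a`) is a right
convolution of the complex, following exactly the inductive construction described in the
paper: for `m = 0`, `a = a_0` and `d_0 = Id`; for `m ≥ 1` one chooses a distinguished
triangle `a_m → a_{m-1} → a'_{m-1} → a_m[1]` on the top differential, a morphism
`d'_{m-1} : a'_{m-1} → a_{m-2}` with `d'_{m-1} ∘ j_{m-1} = d_{m-1}`, and takes a right
convolution of the shorter complex `a'_{m-1} → a_{m-2} → ... → a_0`.
-/

open CategoryTheory CategoryTheory.Limits CategoryTheory.Pretriangulated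

universe v u

variable {D : Type u} [Category.{v} D] [HasZeroObject D] [HasShift D ℤ]
  [Preadditive D] [∀ n : ℤ, (CategoryTheory.shiftFunctor D n).Additive] [Pretriangulated D]

/-- The objects of the complex obtained by replacing the two top terms `a_m → a_{m-1}`
of the complex `b` (top-down indexing) by the cone `x`. -/
def truncObj (b : ℕ → D) (x : D) : ℕ → D
  | 0 => x
  | k + 1 => b (k + 2)

/-- The differentials of the shortened complex: the new top differential is the induced
morphism `d₀ : x ⟶ b 2`, and the remaining differentials are unchanged. -/
def truncMap (b : ℕ → D) (d : ∀ i, b i ⟶ b (i + 1)) (x : D) (d₀ : x ⟶ b 2) :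
    ∀ i, truncObj b x i ⟶ truncObj b x (i + 1)
  | 0 => d₀
  | k + 1 => d (k + 2)

/-- `IsRightConvolution m b d c e` : the morphism `e : b m ⟶ c` (from the bottom object
`a_0 = b m` of the complex to `c`) is a right convolution of the length-`m` complex with
objects `b 0, ..., b m` (written top-down) and differentials `d i : b i ⟶ b (i+1)`. -/
inductive IsRightConvolution :
    ∀ (m : ℕ) (b : ℕ → D) (_ : ∀ i, b i ⟶ b (i + 1)) (c : D), (b m ⟶ c) → Prop
  | zero (b : ℕ → D) (d : ∀ i, b i ⟶ b (i + 1)) :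
      IsRightConvolution 0 b d (b 0) (𝟙 (b 0))
  | one (b : ℕ → D) (d : ∀ i, b i ⟶ b (i + 1)) (x : D) (j : b 1 ⟶ x)
      (δ : x ⟶ (b 0)⟦(1 : ℤ)⟧)
      (_ : Triangle.mk (d 0) j δ ∈ distTriang D) :
      IsRightConvolution 1 b d x j
  | step (m : ℕ) (b : ℕ → D) (d : ∀ i, b i ⟶ b (i + 1)) (x : D) (j : b 1 ⟶ x)
      (δ : x ⟶ (b 0)⟦(1 : ℤ)⟧)
      (_ : Triangle.mk (d 0) j δ ∈ distTriang D)
      (d₀ : x ⟶ b 2) (_ : j ≫ d₀ = d 1)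
      (c : D) (e : b (m + 2) ⟶ c)
      (_ : IsRightConvolution (m + 1) (truncObj b x) (truncMap b d x d₀) c e) :
      IsRightConvolution (m + 2) b d c e

theorem vanish_of_cone {A B X Y : D} (f : A ⟶ B) (j : B ⟶ X) (δ : X ⟶ A⟦(1 : ℤ)⟧)
    (hT : Triangle.mk f j δ ∈ distTriang D) (r : ℤ)
    (hA : ∀ g : A⟦r + 1⟧ ⟶ Y, g = 0) (hB : ∀ g : B⟦r⟧ ⟶ Y, g = 0)
    (g : X⟦r⟧ ⟶ Y) : g = 0 := by
  have hT' := Triangle.shift_distinguished _ hT r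
  obtain ⟨k, hk⟩ := Triangle.yoneda_exact₃ _ hT' g (hB _)
  have hk0 : k = 0 := by
    have h := hA ((shiftFunctorAdd D r 1).hom.app A ≫ k)
    exact (cancel_epi ((shiftFunctorAdd D r 1).hom.app A)).1 (h.trans comp_zero.symm)
  subst hk0
  exact hk.trans comp_zero

theorem eq_of_cone {A B X Y : D} (f : A ⟶ B) (j : B ⟶ X) (δ : X ⟶ A⟦(1 : ℤ)⟧)
    (hT : Triangle.mk f j δ ∈ distTriang D)
    (hA : ∀ g : A⟦(1 : ℤ)⟧ ⟶ Y, g = 0) (g g' : X ⟶ Y) (h : j ≫ g = j ≫ g') : g = g' := by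
  obtain ⟨k, hk⟩ : ∃ k : A⟦(1 : ℤ)⟧ ⟶ Y, g - g' = δ ≫ k :=
    Triangle.yoneda_exact₃ _ hT (g - g')
      (by change j ≫ (g - g') = 0; rw [Preadditive.comp_sub, h, sub_self])
  rw [hA k, comp_zero] at hk
  exact sub_eq_zero.mp hk

theorem trunc_vanish (m : ℕ) (b : ℕ → D) (d : ∀ i, b i ⟶ b (i + 1))
    (hvanish : ∀ i j, i < j → j ≤ m + 2 → ∀ r : ℤ, 0 < r →
      ∀ f : (b i)⟦r⟧ ⟶ b j, f = 0) (x : D) (j : b 1 ⟶ x)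
    (δ : x ⟶ (b 0)⟦(1 : ℤ)⟧) (hT : Triangle.mk (d 0) j δ ∈ distTriang D) :
    ∀ i j, i < j → j ≤ m + 1 → ∀ r : ℤ, 0 < r →
      ∀ f : (truncObj b x i)⟦r⟧ ⟶ truncObj b x j, f = 0 := by
  intro i k hik hk r hr
  obtain ⟨k, rfl⟩ : ∃ l, k = l + 1 := ⟨k - 1, by omega⟩
  cases i with
  | zero =>
    exact vanish_of_cone (Y := b (k + 2)) _ _ _ hT r
      (hvanish 0 (k + 2) (by omega) (by omega) (r + 1) (by omega))
      (hvanish 1 (k + 2) (by omega) (by omega) r hr)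
  | succ i => exact hvanish (i + 2) (k + 2) (by omega) (by omega) r hr

theorem conv_exists (m : ℕ) : ∀ (b : ℕ → D) (d : ∀ i, b i ⟶ b (i + 1))
    (_ : ∀ i, i + 1 < m → d i ≫ d (i + 1) = 0)
    (_ : ∀ i j, i < j → j ≤ m → ∀ r : ℤ, 0 < r → ∀ f : (b i)⟦r⟧ ⟶ b j, f = 0),
    ∃ (c : D) (e : b m ⟶ c), IsRightConvolution m b d c e := by
  induction m with
  | zero => intro b d _ _; exact ⟨_, _, .zero b d⟩
  | succ m ih =>
    intro b d hc hv
    obtain ⟨x, j, δ, hT⟩ := distinguished_cocone_triangle (d 0)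
    cases m with
    | zero => exact ⟨_, _, .one b d x j δ hT⟩
    | succ m =>
      obtain ⟨d₀, hd₀⟩ : ∃ d₀ : x ⟶ b 2, d 1 = j ≫ d₀ :=
        Triangle.yoneda_exact₂ _ hT (d 1) (hc 0 (by omega))
      have hd₀' : j ≫ d₀ = d 1 := hd₀.symm
      obtain ⟨c, e, h⟩ := ih (truncObj b x) (truncMap b d x d₀) (by
        intro i hi
        cases i with
        | zero =>
          refine eq_of_cone (Y := b 3) _ _ _ hT
            (hv 0 3 (by omega) (by omega) 1 (by omega)) (d₀ ≫ d 2) 0 ?_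
          rw [← Category.assoc, hd₀', comp_zero]
          exact hc 1 (by omega)
        | succ i => exact hc (i + 2) (by omega)) (trunc_vanish m b d hv x j δ hT)
      exact ⟨c, e, .step m b d x j δ hT d₀ hd₀' c e h⟩

theorem cone_iso {A B X A' B' X' : D} (f : A ⟶ B) (j : B ⟶ X) (δ : X ⟶ A⟦(1 : ℤ)⟧)
    (hT : Triangle.mk f j δ ∈ distTriang D)
    (f' : A' ⟶ B') (j' : B' ⟶ X') (δ' : X' ⟶ A'⟦(1 : ℤ)⟧)
    (hT' : Triangle.mk f' j' δ' ∈ distTriang D)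
    (α : A ≅ A') (β : B ≅ B') (h : f ≫ β.hom = α.hom ≫ f') :
    ∃ γ : X ≅ X', j ≫ γ.hom = β.hom ≫ j' := by
  refine ⟨Triangle.π₃.mapIso (isoTriangleOfIso₁₂ _ _ hT hT' α β h), ?_⟩
  have h₂ : (isoTriangleOfIso₁₂ _ _ hT hT' α β h).hom.hom₂ = β.hom :=
    isoTriangleOfIso₁₂_hom_hom₂ _ _ hT hT' α β h
  exact (isoTriangleOfIso₁₂ _ _ hT hT' α β h).hom.comm₂.trans
    (congrArg (fun t : B ⟶ B' => t ≫ j') h₂)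

/-- The isomorphisms on the truncated complexes. -/
def truncIso {b b' : ℕ → D} (φ : ∀ i, b i ≅ b' i) {x x' : D} (γ : x ≅ x') :
    ∀ i, truncObj b x i ≅ truncObj b' x' i
  | 0 => γ
  | k + 1 => φ (k + 2)

theorem conv_unique (m : ℕ) : ∀ (b b' : ℕ → D) (d : ∀ i, b i ⟶ b (i + 1))
    (d' : ∀ i, b' i ⟶ b' (i + 1)) (φ : ∀ i, b i ≅ b' i)
    (_ : ∀ i, d i ≫ (φ (i + 1)).hom = (φ i).hom ≫ d' i)
    (_ : ∀ i j, i < j → j ≤ m → ∀ r : ℤ, 0 < r → ∀ f : (b i)⟦r⟧ ⟶ b j, f = 0)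
    (c c' : D) (e : b m ⟶ c) (e' : b' m ⟶ c')
    (_ : IsRightConvolution m b d c e) (_ : IsRightConvolution m b' d' c' e'),
    ∃ ψ : c ≅ c', e ≫ ψ.hom = (φ m).hom ≫ e' := by
  induction m with
  | zero =>
    intro b b' d d' φ hφ hv c c' e e' h h'
    cases h
    cases h'
    exact ⟨φ 0, by simp⟩
  | succ m ih =>
    intro b b' d d' φ hφ hv c c' e e' h h'
    cases h with
    | one _ _ _ _ δ hT =>
      cases h' with
      | one _ _ _ _ δ' hT' => exact cone_iso _ _ _ hT _ _ _ hT' (φ 0) (φ 1) (hφ 0)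
    | step m _ _ x j δ hT d₀ hd₀ _ _ h =>
      cases h' with
      | step _ _ _ x' j' δ' hT' d₀' hd₀' _ _ h' =>
        obtain ⟨γ, hγ⟩ := cone_iso _ _ _ hT _ _ _ hT' (φ 0) (φ 1) (hφ 0)
        refine ih _ _ _ _ (truncIso φ γ) ?_ (trunc_vanish m b d hv x j δ hT) c c' e e' h h'
        intro i
        cases i with
        | zero =>
          refine eq_of_cone (Y := b' 2) _ _ _ hT ?_ (d₀ ≫ (φ 2).hom) (γ.hom ≫ d₀') ?_
          · intro g
            have := hv 0 2 (by omega) (by omega) 1 (by omega) (g ≫ (φ 2).inv)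
            rw [← cancel_mono (φ 2).inv, this, zero_comp]
          · rw [← Category.assoc, hd₀, ← Category.assoc, hγ, Category.assoc, hd₀']
            exact hφ 1
        | succ i => exact hφ (i + 2)

/-- A bounded complex `a_m → ... → a_0` in a triangulated category with
`Hom(a_p[r], a_q) = 0` for `p > q`, `r > 0` admits a right convolution `d_0 : a_0 → a`,
unique up to isomorphism (compatibly with `d_0`).  Here `b i = a_{m-i}`, so the conditions
`p > q` and `r > 0` become `i < j ≤ m` and `0 < r`. -/
theorem right_convolution_exists_and_unique_up_to_iso
    (m : ℕ) (b : ℕ → D) (d : ∀ i, b i ⟶ b (i + 1))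
    (hcomplex : ∀ i, i + 1 < m → d i ≫ d (i + 1) = 0)
    (hvanish : ∀ i j, i < j → j ≤ m → ∀ r : ℤ, 0 < r →
      ∀ f : (b i)⟦r⟧ ⟶ b j, f = 0) :
    (∃ (c : D) (e : b m ⟶ c), IsRightConvolution m b d c e) ∧
    (∀ (c₁ c₂ : D) (e₁ : b m ⟶ c₁) (e₂ : b m ⟶ c₂),
      IsRightConvolution m b d c₁ e₁ → IsRightConvolution m b d c₂ e₂ →
      ∃ φ : c₁ ≅ c₂, e₁ ≫ φ.hom = e₂) := by
  refine ⟨conv_exists m b d hcomplex hvanish, fun c₁ c₂ e₁ e₂ h₁ h₂ => ?_⟩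
  obtain ⟨ψ, hψ⟩ := conv_unique m b b d d (fun i => Iso.refl _) (fun i => by simp) hvanish
    c₁ c₂ e₁ e₂ h₁ h₂
  exact ⟨ψ, by simpa using hψ⟩
end

section
/- Let D be a triangulated category and let f_• : (a_•, d_•) → (b_•, e_•) be a morphism between two bounded complexes a_m → ... → a_0 and b_m → ... → b_0 in D, each satisfying Hom_D(a_p[r], a_q) = 0 and Hom_D(b_p[r], b_q) = 0 for p > q, r > 0. Let d_0 : a_0 → a and e_0 : b_0 → b be right convolutions of these complexes and let ε : b → b' be a morphism. Assume in addition that Hom_D(a_p[r], b_q) = 0 for all p > q and r > 0. Then there exists a morphism f : a → b' with f ∘ d_0 = ε ∘ e_0 ∘ f_0. Moreover, f is unique with this property if Hom_D(a_p[r], b') = 0 for all p and all r > 0. -/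
/-!
Statement 1 (cf. Orlov, Lemma 1.6).

Let `f_• : (a_•, d_•) → (b_•, e_•)` be a morphism between two bounded complexes
`a_m → ... → a_0` and `b_m → ... → b_0` in a triangulated category `D`, each satisfying
`Hom(a_p[r], a_q) = 0` resp. `Hom(b_p[r], b_q) = 0` for `p > q`, `r > 0`.
Let `d_0 : a_0 → a` and `e_0 : b_0 → b` be right convolutions and `ε : b → b'` a morphism.
If moreover `Hom(a_p[r], b_q) = 0` for `p > q`, `r > 0`, then there is `f : a → b'` with
`f ∘ d_0 = ε ∘ e_0 ∘ f_0`; it is unique with this property if `Hom(a_p[r], b') = 0` for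
all `p` and `r > 0`.

Complexes are encoded with *top-down* indexing: `a i` is the object `a_{m-i}` of the
complex (`a 0` is the top, `a m` is the bottom `a_0`), the differential
`da i : a i ⟶ a (i+1)` is `d_{m-i}`, and a morphism of complexes is a family
`f i : a i ⟶ b i` commuting with the differentials.  In particular the component `f_0`
at the bottom objects is `f m`.  The predicate `IsRightConvolution` follows the
inductive construction of right convolutions from the paper.
-/

open CategoryTheory CategoryTheory.Limits CategoryTheory.Pretriangulated

universe v u

variable {D : Type u} [Category.{v} D] [HasZeroObject D] [HasShift D ℤ]
  [Preadditive D] [∀ n : ℤ, (CategoryTheory.shiftFunctor D n).Additive] [Pretriangulated D]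

/-- Vanishing passes to cones. -/
theorem cone_vanish {A B X Y : D} {u : A ⟶ B} {j : B ⟶ X} {δ : X ⟶ A⟦(1 : ℤ)⟧}
    (hT : Triangle.mk u j δ ∈ distTriang D) (r : ℤ)
    (hB : ∀ g : B⟦r⟧ ⟶ Y, g = 0) (hA : ∀ g : A⟦r + 1⟧ ⟶ Y, g = 0)
    (g : X⟦r⟧ ⟶ Y) : g = 0 := by
  have hS := Triangle.shift_distinguished _ hT r
  obtain ⟨k, hk⟩ := Triangle.yoneda_exact₃ _ hS g (hB _)
  have e : (A⟦r⟧)⟦(1 : ℤ)⟧ ≅ A⟦r + 1⟧ := ((shiftFunctorAdd D r 1).app A).symm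
  have : k = 0 := by
    have h := hA (e.inv ≫ k)
    exact (cancel_epi e.inv).1 (h.trans comp_zero.symm)
  rw [hk, this]
  exact comp_zero

theorem cone_ext {A B X Y : D} {u : A ⟶ B} {j : B ⟶ X} {δ : X ⟶ A⟦(1 : ℤ)⟧}
    (hT : Triangle.mk u j δ ∈ distTriang D)
    (hA : ∀ g : A⟦(1 : ℤ)⟧ ⟶ Y, g = 0) (g h : X ⟶ Y) (hgh : j ≫ g = j ≫ h) : g = h := by
  obtain ⟨k, hk⟩ := Triangle.yoneda_exact₃ _ hT (g - h)
    (show j ≫ (g - h) = 0 by rw [Preadditive.comp_sub, hgh, sub_self])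
  rw [hA k] at hk
  exact sub_eq_zero.1 (hk.trans comp_zero)

/-- The morphism between truncated complexes. -/
def truncHom (a b : ℕ → D) (f : ∀ i, a i ⟶ b i) {x y : D} (g : x ⟶ y) :
    ∀ i, truncObj a x i ⟶ truncObj b y i
  | 0 => g
  | k + 1 => f (k + 2)

theorem hom_aux
    (m : ℕ) : ∀ (a : ℕ → D) (da : ∀ i, a i ⟶ a (i + 1))
    (b : ℕ → D) (db : ∀ i, b i ⟶ b (i + 1))
    (f : ∀ i, a i ⟶ b i)
    (_ : ∀ i, i < m → da i ≫ f (i + 1) = f i ≫ db i)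
    (ca cb : D) (d₀ : a m ⟶ ca) (e₀ : b m ⟶ cb)
    (_ : IsRightConvolution m a da ca d₀) (_ : IsRightConvolution m b db cb e₀)
    (b' : D) (ε : cb ⟶ b')
    (_ : ∀ i j, i < j → j ≤ m → ∀ r : ℤ, 0 < r → ∀ g : (a i)⟦r⟧ ⟶ b j, g = 0),
    (∃ φ : ca ⟶ b', d₀ ≫ φ = f m ≫ e₀ ≫ ε) ∧
    ((∀ p, p ≤ m → ∀ r : ℤ, 0 < r → ∀ g : (a p)⟦r⟧ ⟶ b', g = 0) →
      ∀ φ₁ φ₂ : ca ⟶ b', d₀ ≫ φ₁ = f m ≫ e₀ ≫ ε → d₀ ≫ φ₂ = f m ≫ e₀ ≫ ε →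
        φ₁ = φ₂) := by
  induction m with
  | zero =>
    intro a da b db f hf ca cb d₀ e₀ hca hcb b' ε hv
    cases hca
    refine ⟨⟨f 0 ≫ e₀ ≫ ε, Category.id_comp _⟩, fun _ φ₁ φ₂ h₁ h₂ => ?_⟩
    have := h₁.trans h₂.symm
    rwa [Category.id_comp, Category.id_comp] at this
  | succ m ih =>
    intro a da b db f hf ca cb d₀ e₀ hca hcb b' ε hv
    cases hca with
    | one _ _ _ _ δ hT =>
      cases hcb with
      | one _ _ _ _ δ' hT' =>
        have hz : db 0 ≫ e₀ = 0 := comp_distTriang_mor_zero₁₂ _ hT'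
        constructor
        · obtain ⟨φ, hφ⟩ := Triangle.yoneda_exact₂ _ hT (f 1 ≫ e₀ ≫ ε)
            (show da 0 ≫ f 1 ≫ e₀ ≫ ε = 0 by
              rw [← Category.assoc, hf 0 (by omega), Category.assoc, ← Category.assoc (db 0),
                hz, zero_comp, comp_zero])
          exact ⟨φ, hφ.symm⟩
        · intro hp φ₁ φ₂ h₁ h₂
          exact cone_ext hT (hp 0 (by omega) 1 one_pos) _ _ (h₁.trans h₂.symm)
    | step m _ _ x j δ hT dx hdx _ _ hx =>
      cases hcb with
      | step _ _ _ y k δ' hT' dy hdy _ _ hy =>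
        obtain ⟨g, hg⟩ : ∃ g : x ⟶ y, j ≫ g = f 1 ≫ k := by
          obtain ⟨g, hg, -⟩ := complete_distinguished_triangle_morphism _ _ hT hT' (f 0) (f 1)
            (hf 0 (by omega))
          exact ⟨g, hg⟩
        have hsq : dx ≫ f 2 = g ≫ dy := by
          refine cone_ext hT (hv 0 2 (by omega) (by omega) 1 one_pos) _ _ ?_
          rw [← Category.assoc, hdx, ← Category.assoc, hg, Category.assoc, hdy]
          exact hf 1 (by omega)
        have key := ih (truncObj a x) (truncMap a da x dx) (truncObj b y) (truncMap b db y dy)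
          (truncHom a b f g)
          (by
            rintro (_ | i) hi
            · exact hsq
            · exact hf (i + 2) (by omega))
          ca cb d₀ e₀ hx hy b' ε
          (by
            rintro (_ | i) (_ | q) hiq hq r hr
            · omega
            · exact cone_vanish hT r (hv 1 (q + 2) (by omega) (by omega) r hr)
                (hv 0 (q + 2) (by omega) (by omega) (r + 1) (by omega))
            · omega
            · exact hv (i + 2) (q + 2) (by omega) (by omega) r hr)
        refine ⟨key.1, fun hp => key.2 ?_⟩
        rintro (_ | p) hpm r hr
        · exact cone_vanish hT r (hp 1 (by omega) r hr) (hp 0 (by omega) (r + 1) (by omega))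
        · exact hp (p + 2) (by omega) r hr

/-- Existence (and conditional uniqueness) of a morphism between right
convolutions induced by a morphism of complexes, after composition with `ε : b ⟶ b'`. -/
theorem hom_of_right_convolutions
    (m : ℕ) (a : ℕ → D) (da : ∀ i, a i ⟶ a (i + 1))
    (b : ℕ → D) (db : ∀ i, b i ⟶ b (i + 1))
    (hcomplexa : ∀ i, i + 1 < m → da i ≫ da (i + 1) = 0)
    (hcomplexb : ∀ i, i + 1 < m → db i ≫ db (i + 1) = 0)
    (hvanisha : ∀ i j, i < j → j ≤ m → ∀ r : ℤ, 0 < r → ∀ f : (a i)⟦r⟧ ⟶ a j, f = 0)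
    (hvanishb : ∀ i j, i < j → j ≤ m → ∀ r : ℤ, 0 < r → ∀ f : (b i)⟦r⟧ ⟶ b j, f = 0)
    -- the morphism of complexes `f_•`
    (f : ∀ i, a i ⟶ b i)
    (hf : ∀ i, i < m → da i ≫ f (i + 1) = f i ≫ db i)
    -- the right convolutions `d_0 : a_0 → ca` and `e_0 : b_0 → cb`
    (ca cb : D) (d₀ : a m ⟶ ca) (e₀ : b m ⟶ cb)
    (hca : IsRightConvolution m a da ca d₀) (hcb : IsRightConvolution m b db cb e₀)
    -- a further morphism `ε : cb ⟶ b'`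
    (b' : D) (ε : cb ⟶ b')
    -- the additional vanishing `Hom(a_p[r], b_q) = 0` for `p > q`, `r > 0`
    (hvanishab : ∀ i j, i < j → j ≤ m → ∀ r : ℤ, 0 < r → ∀ g : (a i)⟦r⟧ ⟶ b j, g = 0) :
    (∃ φ : ca ⟶ b', d₀ ≫ φ = f m ≫ e₀ ≫ ε) ∧
    ((∀ p, p ≤ m → ∀ r : ℤ, 0 < r → ∀ g : (a p)⟦r⟧ ⟶ b', g = 0) →
      ∀ φ₁ φ₂ : ca ⟶ b', d₀ ≫ φ₁ = f m ≫ e₀ ≫ ε → d₀ ≫ φ₂ = f m ≫ e₀ ≫ ε →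
        φ₁ = φ₂) := by
  exact hom_aux m a da b db f hf ca cb d₀ e₀ hca hcb b' ε hvanishab
end

section
/- Let D and D' be triangulated categories, let a_m → ... → a_0 be a bounded complex in D satisfying Hom_D(a_p[r], a_q) = 0 for p > q, r > 0, and let d_0 : a_0 → a be a right convolution of this complex. If F : D → D' is a fully faithful exact functor, then the complex F(a_m) → F(a_{m-1}) → ... → F(a_1) → F(a_0) in D' satisfies Hom_{D'}(F(a_p)[r], F(a_q)) = 0 for p > q, r > 0, and F(d_0) : F(a_0) → F(a) is a right convolution of it. -/
/-!
Statement 4.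

Let `D` and `D'` be triangulated categories, `a_m → ... → a_0` a bounded complex in `D`
satisfying `Hom_D(a_p[r], a_q) = 0` for `p > q`, `r > 0`, and `d_0 : a_0 → a` a right
convolution.  If `F : D ⥤ D'` is a fully faithful exact functor (i.e. `F` commutes with
the shift and sends distinguished triangles to distinguished triangles), then the image
complex `F(a_m) → ... → F(a_0)` satisfies the corresponding vanishing condition, and
`F(d_0) : F(a_0) → F(a)` is a right convolution of it.

Complexes are encoded with *top-down* indexing: `b i = a_{m-i}`, and the predicate
`IsRightConvolution` follows the inductive construction of right convolutions.
-/

open CategoryTheory CategoryTheory.Limits CategoryTheory.Pretriangulated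

universe v u v' u'

variable {D : Type u} [Category.{v} D] [HasZeroObject D] [HasShift D ℤ]
  [Preadditive D] [∀ n : ℤ, (CategoryTheory.shiftFunctor D n).Additive] [Pretriangulated D]

theorem IsRightConvolution.congr_aux (m : ℕ) (b b' : ℕ → D) (d : ∀ i, b i ⟶ b (i + 1))
    (d' : ∀ i, b' i ⟶ b' (i + 1)) (c : D) (e : b m ⟶ c) (e' : b' m ⟶ c)
    (hb : b = b') (hd : ∀ i, HEq (d i) (d' i)) (he : HEq e e')
    (h : IsRightConvolution m b d c e) : IsRightConvolution m b' d' c e' := by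
  subst hb
  obtain rfl : d = d' := funext fun i => eq_of_heq (hd i)
  obtain rfl := eq_of_heq he
  exact h

theorem IsRightConvolution.map_aux
    {D' : Type u'} [Category.{v'} D'] [HasZeroObject D'] [HasShift D' ℤ]
    [Preadditive D'] [∀ n : ℤ, (CategoryTheory.shiftFunctor D' n).Additive]
    [Pretriangulated D'] (F : D ⥤ D') [F.CommShift ℤ] [F.IsTriangulated]
    {m : ℕ} {b : ℕ → D} {d : ∀ i, b i ⟶ b (i + 1)}
    {c : D} {e : b m ⟶ c} (hconv : IsRightConvolution m b d c e) :
    IsRightConvolution m (fun i => F.obj (b i)) (fun i => F.map (d i))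
      (F.obj c) (F.map e) := by
  induction hconv with
  | zero b d =>
    rw [F.map_id]
    exact IsRightConvolution.zero (fun i => F.obj (b i)) (fun i => F.map (d i))
  | one b d x j δ h =>
    exact IsRightConvolution.one (fun i => F.obj (b i)) (fun i => F.map (d i)) _ _ _
      (F.map_distinguished _ h)
  | step m b d x j δ h d₀ hd c e _ ih =>
    refine IsRightConvolution.step m (fun i => F.obj (b i)) (fun i => F.map (d i)) _ (F.map j) _
      (F.map_distinguished _ h) (F.map d₀) (by rw [← F.map_comp, hd]) _ _ ?_
    refine IsRightConvolution.congr_aux _ _ _ _ _ _ _ _ ?_ ?_ ?_ ih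
    · funext i; cases i <;> rfl
    · intro i; cases i <;> exact HEq.rfl
    · exact HEq.rfl

/-- The image of a right convolution under a fully faithful exact
functor is a right convolution of the image complex. -/
theorem map_right_convolution
    {D' : Type u'} [Category.{v'} D'] [HasZeroObject D'] [HasShift D' ℤ]
    [Preadditive D'] [∀ n : ℤ, (CategoryTheory.shiftFunctor D' n).Additive]
    [Pretriangulated D']
    (m : ℕ) (b : ℕ → D) (d : ∀ i, b i ⟶ b (i + 1))
    (hcomplex : ∀ i, i + 1 < m → d i ≫ d (i + 1) = 0)
    (hvanish : ∀ i j, i < j → j ≤ m → ∀ r : ℤ, 0 < r → ∀ f : (b i)⟦r⟧ ⟶ b j, f = 0)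
    (c : D) (e : b m ⟶ c) (hconv : IsRightConvolution m b d c e)
    (F : D ⥤ D') [F.CommShift ℤ] [F.IsTriangulated] [F.Full] [F.Faithful] :
    (∀ i j, i < j → j ≤ m → ∀ r : ℤ, 0 < r →
      ∀ g : (F.obj (b i))⟦r⟧ ⟶ F.obj (b j), g = 0) ∧
    IsRightConvolution m (fun i => F.obj (b i)) (fun i => F.map (d i))
      (F.obj c) (F.map e) := by
  refine ⟨fun i j hij hj r hr g => ?_, hconv.map_aux F⟩
  obtain ⟨f, hf⟩ := F.map_surjective ((F.commShiftIso r).hom.app (b i) ≫ g)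
  rw [hvanish i j hij hj r hr f, F.map_zero] at hf
  rw [← cancel_epi ((F.commShiftIso r).hom.app (b i)), ← hf, comp_zero]
end
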